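/- arXiv:1805.00715 — 3 statements merged into one kernel-verified Lean document; each statement's English description precedes it below -/
import Mathlib

section
/- Let H be a real inner product space, let V ⊆ W be complete subspaces of H with orthogonal projections P_V and P_W, let u ∈ H, and let 0 ≤ q < 1. If the reliability bound ‖u − P_V u‖ ≤ (1 − q²)^{−1/2} · ‖P_W u − P_V u‖ holds, then the saturation assumption ‖u − P_W u‖ ≤ q·‖u − P_V u‖ holds. Together with the converse implication, reliability with constant (1 − q²)^{−1/2} is equivalent to saturation with constant q. -/
theorem le_rpow_neg_half_mul_iff {s x y : ℝ} (hs : 0 < s) (hx : 0 ≤ x) (hy : 0 ≤ y) :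
    x ≤ s ^ (-(1 / 2) : ℝ) * y ↔ s * x ^ 2 ≤ y ^ 2 := by
  rw [Real.rpow_neg hs.le, ← Real.sqrt_eq_rpow, le_inv_mul_iff₀ (Real.sqrt_pos.mpr hs),
    ← sq_le_sq₀ (by positivity) hy, mul_pow, Real.sq_sqrt hs.le]

section Projection

variable {𝕜 E : Type*} [RCLike 𝕜] [NormedAddCommGroup E] [InnerProductSpace 𝕜 E]

theorem norm_sub_sq_eq_norm_sub_starProjection_sq_add {W : Submodule 𝕜 E}
    [W.HasOrthogonalProjection] (u : E) {v : E} (hv : v ∈ W) :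
    ‖u - v‖ ^ 2 = ‖u - W.starProjection u‖ ^ 2 + ‖W.starProjection u - v‖ ^ 2 := by
  have h_orth : inner 𝕜 (u - W.starProjection u) (W.starProjection u - v) = 0 :=
    W.starProjection_inner_eq_zero u _ (W.sub_mem (W.starProjection_apply_mem u) hv)
  simpa only [sub_add_sub_cancel, ← sq] using
    norm_add_sq_eq_norm_sq_add_norm_sq_of_inner_eq_zero _ _ h_orth

theorem reliability_iff_saturation_general {W : Submodule 𝕜 E} [W.HasOrthogonalProjection]
    (u : E) {v : E} (hv : v ∈ W) {q : ℝ} (hq0 : 0 ≤ q) (hq1 : q < 1) :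
    ‖u - v‖ ≤ (1 - q ^ 2) ^ (-(1 / 2) : ℝ) * ‖W.starProjection u - v‖
      ↔ ‖u - W.starProjection u‖ ≤ q * ‖u - v‖ := by
  have h_pyth := norm_sub_sq_eq_norm_sub_starProjection_sq_add u hv
  have h_pos : 0 < 1 - q ^ 2 := sub_pos.mpr (pow_lt_one₀ hq0 hq1 two_ne_zero)
  calc
    ‖u - v‖ ≤ (1 - q ^ 2) ^ (-(1 / 2) : ℝ) * ‖W.starProjection u - v‖
      ↔ (1 - q ^ 2) * ‖u - v‖ ^ 2 ≤ ‖W.starProjection u - v‖ ^ 2 :=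
        le_rpow_neg_half_mul_iff h_pos (norm_nonneg _) (norm_nonneg _)
    _ ↔ ‖u - W.starProjection u‖ ^ 2 ≤ (q * ‖u - v‖) ^ 2 := by
        rw [mul_pow]
        constructor <;> intro h <;> linarith
    _ ↔ ‖u - W.starProjection u‖ ≤ q * ‖u - v‖ :=
        sq_le_sq₀ (norm_nonneg _) (by positivity)

end Projection

/-- Reliability with constant `(1 - q²)^(-1/2)` is equivalent to saturation with
constant `q`: in particular the reliability bound implies the saturation assumption. -/
theorem reliability_iff_saturation
    {H : Type*} [NormedAddCommGroup H] [InnerProductSpace ℝ H]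
    (V W : Submodule ℝ H) [CompleteSpace V] [CompleteSpace W]
    (hVW : V ≤ W) (u : H) (q : ℝ) (hq0 : 0 ≤ q) (hq1 : q < 1) :
    (‖u - (Submodule.orthogonalProjectionOnto V u : H)‖
        ≤ (1 - q ^ 2) ^ (-(1 / 2) : ℝ)
          * ‖(Submodule.orthogonalProjectionOnto W u : H) - (Submodule.orthogonalProjectionOnto V u : H)‖)
      ↔ ‖u - (Submodule.orthogonalProjectionOnto W u : H)‖
          ≤ q * ‖u - (Submodule.orthogonalProjectionOnto V u : H)‖ :=
  reliability_iff_saturation_general u (hVW (V.starProjection_apply_mem u)) hq0 hq1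
end

section
/- Let (a_ℓ)_{ℓ∈ℕ} and (b_ℓ)_{ℓ∈ℕ} be sequences of nonnegative real numbers, let 0 ≤ κ < 1 and C₁, C₂ ≥ 0, and suppose that (estimator reduction) a_{ℓ+1}² ≤ κ·a_ℓ² + C₁·b_ℓ² for all ℓ, and (general quasi-orthogonality) ∑_{j=ℓ}^{∞} b_j² ≤ C₂·a_ℓ² for all ℓ. Then for every ℓ the series ∑_{j=ℓ}^{∞} a_j² converges and satisfies ∑_{j=ℓ}^{∞} a_j² ≤ ((1 + C₁·C₂)/(1 − κ))·a_ℓ². -/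
/-! Summing `x (j + 1) ≤ κ * x j + e j` over `j` gives `∑ x - x 0 ≤ κ * ∑ x + ∑ e`, and the term
`κ * ∑ x` is absorbed on the left because `κ < 1`. For partial sums this yields a uniform bound,
hence convergence, which makes the same absorption legitimate for the whole series. -/

open Finset

theorem one_sub_mul_sum_range_add_le_of_succ_le_mul_add {R : Type*} [Ring R] [PartialOrder R]
    [IsOrderedAddMonoid R] {x e : ℕ → R} {κ : R} (h : ∀ n, x (n + 1) ≤ κ * x n + e n) (n : ℕ) :
    (1 - κ) * ∑ j ∈ range n, x j + x n ≤ x 0 + ∑ j ∈ range n, e j :=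
  calc (1 - κ) * ∑ j ∈ range n, x j + x n
      = ∑ j ∈ range (n + 1), x j - κ * ∑ j ∈ range n, x j := by
        rw [sum_range_succ, sub_mul, one_mul, sub_add_eq_add_sub]
    _ = x 0 + ∑ j ∈ range n, (x (j + 1) - κ * x j) := by
        rw [sum_range_succ', sum_sub_distrib, mul_sum]; abel
    _ ≤ x 0 + ∑ j ∈ range n, e j := by
        gcongr with j
        exact sub_le_iff_le_add'.2 (h j)

section Real

variable {x e : ℕ → ℝ} {κ : ℝ}

theorem summable_of_succ_le_mul_add (hx : ∀ n, 0 ≤ x n) (hκ : κ < 1) (he : Summable e)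
    (h : ∀ n, x (n + 1) ≤ κ * x n + e n) : Summable x := by
  obtain ⟨B, hB⟩ := he.hasSum.tendsto_sum_nat.bddAbove_range
  refine summable_of_sum_range_le (c := (x 0 + B) / (1 - κ)) hx fun n ↦ ?_
  rw [le_div_iff₀' (sub_pos.2 hκ)]
  calc (1 - κ) * ∑ j ∈ range n, x j
      ≤ (1 - κ) * ∑ j ∈ range n, x j + x n := le_add_of_nonneg_right (hx n)
    _ ≤ x 0 + ∑ j ∈ range n, e j := one_sub_mul_sum_range_add_le_of_succ_le_mul_add h n
    _ ≤ x 0 + B := by gcongr; exact hB ⟨n, rfl⟩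

theorem one_sub_mul_tsum_le_of_succ_le_mul_add (hx : Summable x) (he : Summable e)
    (h : ∀ n, x (n + 1) ≤ κ * x n + e n) : (1 - κ) * ∑' n, x n ≤ x 0 + ∑' n, e n := by
  have shifted : ∑' n, x (n + 1) ≤ κ * ∑' n, x n + ∑' n, e n :=
    calc ∑' n, x (n + 1)
        ≤ ∑' n, (κ * x n + e n) :=
          ((summable_nat_add_iff 1).2 hx).tsum_le_tsum h ((hx.mul_left κ).add he)
      _ = κ * ∑' n, x n + ∑' n, e n := by rw [(hx.mul_left κ).tsum_add he, tsum_mul_left]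
  linarith [hx.tsum_eq_zero_add]

end Real

theorem tail_sum_domination_of_reduction_general
    {x y : ℕ → ℝ} (hx : ∀ ℓ, 0 ≤ x ℓ) {κ C₁ C₂ : ℝ} (hκ : κ < 1) (hC₁ : 0 ≤ C₁)
    (hred : ∀ ℓ, x (ℓ + 1) ≤ κ * x ℓ + C₁ * y ℓ) (hy : Summable y)
    (hquasi : ∀ ℓ, ∑' j, y (ℓ + j) ≤ C₂ * x ℓ) (ℓ : ℕ) :
    Summable (fun j ↦ x (ℓ + j)) ∧
      ∑' j, x (ℓ + j) ≤ (1 + C₁ * C₂) / (1 - κ) * x ℓ := by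
  have hred_tail (j : ℕ) : x (ℓ + (j + 1)) ≤ κ * x (ℓ + j) + C₁ * y (ℓ + j) := hred (ℓ + j)
  have hy_tail : Summable fun j ↦ C₁ * y (ℓ + j) :=
    (hy.comp_injective (add_right_injective ℓ)).mul_left C₁
  have hx_tail : Summable fun j ↦ x (ℓ + j) :=
    summable_of_succ_le_mul_add (fun j ↦ hx (ℓ + j)) hκ hy_tail hred_tail
  refine ⟨hx_tail, ?_⟩
  rw [div_mul_eq_mul_div, le_div_iff₀' (sub_pos.2 hκ)]
  calc (1 - κ) * ∑' j, x (ℓ + j)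
      ≤ x ℓ + ∑' j, C₁ * y (ℓ + j) :=
        one_sub_mul_tsum_le_of_succ_le_mul_add hx_tail hy_tail hred_tail
    _ = x ℓ + C₁ * ∑' j, y (ℓ + j) := by rw [tsum_mul_left]
    _ ≤ x ℓ + C₁ * (C₂ * x ℓ) := by gcongr; exact hquasi ℓ
    _ = (1 + C₁ * C₂) * x ℓ := by ring

/-- Estimator reduction plus general quasi-orthogonality imply uniform tail-sum
domination: `∑_{j=ℓ}^{∞} a_j² ≤ ((1 + C₁ C₂)/(1 - κ)) a_ℓ²`. -/
theorem tail_sum_domination_of_reduction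
    (a b : ℕ → ℝ) (ha : ∀ ℓ, 0 ≤ a ℓ) (hb : ∀ ℓ, 0 ≤ b ℓ)
    (κ C₁ C₂ : ℝ) (hκ0 : 0 ≤ κ) (hκ1 : κ < 1) (hC₁ : 0 ≤ C₁) (hC₂ : 0 ≤ C₂)
    (hred : ∀ ℓ, (a (ℓ + 1)) ^ 2 ≤ κ * (a ℓ) ^ 2 + C₁ * (b ℓ) ^ 2)
    (hbsum : Summable (fun j : ℕ => (b j) ^ 2))
    (hquasi : ∀ ℓ, ∑' j : ℕ, (b (ℓ + j)) ^ 2 ≤ C₂ * (a ℓ) ^ 2) :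
    ∀ ℓ, Summable (fun j : ℕ => (a (ℓ + j)) ^ 2)
      ∧ ∑' j : ℕ, (a (ℓ + j)) ^ 2 ≤ ((1 + C₁ * C₂) / (1 - κ)) * (a ℓ) ^ 2 :=
  tail_sum_domination_of_reduction_general (fun ℓ ↦ sq_nonneg (a ℓ)) hκ1 hC₁ hred hbsum hquasi
end

section
/- Let (a_ℓ)_{ℓ∈ℕ} and (b_ℓ)_{ℓ∈ℕ} be sequences of nonnegative real numbers, let 0 ≤ κ < 1 and C₁, C₂ ≥ 0, and suppose that a_{ℓ+1}² ≤ κ·a_ℓ² + C₁·b_ℓ² for all ℓ, and ∑_{j=ℓ}^{∞} b_j² ≤ C₂·a_ℓ² for all ℓ. Then there exist constants C_lin ≥ 1 and 0 < q < 1 such that a_{ℓ+n} ≤ C_lin·qⁿ·a_ℓ for all ℓ, n ∈ ℕ. -/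
/-!
Write `α ℓ = (a ℓ)²` and let `T ℓ` be the tail sum of the `(b j)²` from `j = ℓ` on. The term
`C₁ (b ℓ)²` by which `α` may fail to contract is exactly what `C₁ T` loses in one step, so
`Λ = α + C₁ T` satisfies `Λ (ℓ + 1) ≤ κ α ℓ + C₁ T ℓ`. Since `C₁ T ≤ C₁ C₂ α`, a small part of
`C₁ T` can be absorbed into the gap `(1 - κ) α`, and the right-hand side is at most `ρ Λ ℓ` as soon
as `(1 - ρ) C₁ C₂ ≤ ρ - κ`. As `α ≤ Λ ≤ (1 + C₁ C₂) α`, the geometric decay of `Λ` passes to `α`.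
-/

open Filter Set Topology

theorem tsum_add_left_eq_add_tsum_succ {M : Type*} [AddCommGroup M] [TopologicalSpace M]
    [IsTopologicalAddGroup M] [T2Space M] {f : ℕ → M} (hf : Summable f) (n : ℕ) :
    ∑' j, f (n + j) = f n + ∑' j, f (n + 1 + j) := by
  have htail : Summable fun j ↦ f (n + j) := by
    simpa only [add_comm] using (summable_nat_add_iff n).2 hf
  simpa only [add_zero, add_assoc, add_comm 1] using htail.tsum_eq_zero_add

/-- The Lyapunov function `α n + C * ∑_{j ≥ n} β j`: the squared estimator `α` augmented by a
multiple of all perturbations `β` still to come. The tail is indexed by its offset from `n`. -/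
noncomputable def augmentedEstimator (C : ℝ) (α β : ℕ → ℝ) (n : ℕ) : ℝ :=
  α n + C * ∑' j, β (n + j)

section AugmentedEstimator

variable {α β : ℕ → ℝ} {κ ρ C D : ℝ} {n : ℕ}

theorem le_augmentedEstimator (hC : 0 ≤ C) (hβ : ∀ j, 0 ≤ β j) :
    α n ≤ augmentedEstimator C α β n :=
  le_add_of_nonneg_right (mul_nonneg hC (tsum_nonneg fun _ ↦ hβ _))

theorem augmentedEstimator_le (hC : 0 ≤ C) (hquasi : ∑' j, β (n + j) ≤ D * α n) :
    augmentedEstimator C α β n ≤ (1 + C * D) * α n :=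
  calc
    α n + C * ∑' j, β (n + j) ≤ α n + C * (D * α n) := by gcongr
    _ = (1 + C * D) * α n := by ring

theorem augmentedEstimator_succ_le_add (hβ : Summable β)
    (hred : α (n + 1) ≤ κ * α n + C * β n) :
    augmentedEstimator C α β (n + 1) ≤ κ * α n + C * ∑' j, β (n + j) :=
  calc
    α (n + 1) + C * ∑' j, β (n + 1 + j)
      ≤ κ * α n + C * β n + C * ∑' j, β (n + 1 + j) := by gcongr
    _ = κ * α n + C * ∑' j, β (n + j) := by
      rw [tsum_add_left_eq_add_tsum_succ hβ n]; ring

theorem augmentedEstimator_succ_le_mul (hC : 0 ≤ C) (hρ : ρ ≤ 1) (hκρ : (1 - ρ) * (C * D) ≤ ρ - κ)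
    (hα : 0 ≤ α n) (hβ : Summable β) (hred : α (n + 1) ≤ κ * α n + C * β n)
    (hquasi : ∑' j, β (n + j) ≤ D * α n) :
    augmentedEstimator C α β (n + 1) ≤ ρ * augmentedEstimator C α β n := by
  have habsorb : (1 - ρ) * (C * ∑' j, β (n + j)) ≤ (ρ - κ) * α n :=
    calc
      (1 - ρ) * (C * ∑' j, β (n + j)) ≤ (1 - ρ) * (C * (D * α n)) := by
        have : 0 ≤ 1 - ρ := sub_nonneg.2 hρ
        gcongr
      _ = (1 - ρ) * (C * D) * α n := by ring
      _ ≤ (ρ - κ) * α n := by gcongr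
  calc
    augmentedEstimator C α β (n + 1) ≤ κ * α n + C * ∑' j, β (n + j) :=
      augmentedEstimator_succ_le_add hβ hred
    _ ≤ ρ * (α n + C * ∑' j, β (n + j)) := by linarith

theorem le_mul_pow_mul_of_reduction_of_quasiorthogonality (hC : 0 ≤ C) (hρ₀ : 0 ≤ ρ) (hρ₁ : ρ ≤ 1)
    (hκρ : (1 - ρ) * (C * D) ≤ ρ - κ) (hα : ∀ n, 0 ≤ α n) (hβ₀ : ∀ n, 0 ≤ β n) (hβ : Summable β)
    (hred : ∀ n, α (n + 1) ≤ κ * α n + C * β n)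
    (hquasi : ∀ n, ∑' j, β (n + j) ≤ D * α n) (ℓ n : ℕ) :
    α (ℓ + n) ≤ (1 + C * D) * ρ ^ n * α ℓ :=
  calc
    α (ℓ + n) ≤ augmentedEstimator C α β (ℓ + n) := le_augmentedEstimator hC hβ₀
    _ ≤ ρ ^ n * augmentedEstimator C α β ℓ :=
      le_geom (u := fun k ↦ augmentedEstimator C α β (ℓ + k)) hρ₀ n fun k _ ↦
        augmentedEstimator_succ_le_mul hC hρ₁ hκρ (hα _) hβ (hred _) (hquasi _)
    _ ≤ ρ ^ n * ((1 + C * D) * α ℓ) := by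
      gcongr
      exact augmentedEstimator_le hC (hquasi ℓ)
    _ = (1 + C * D) * ρ ^ n * α ℓ := by ring

end AugmentedEstimator

theorem exists_mem_Ioo_one_sub_mul_le_sub {κ : ℝ} (hκ : κ < 1) (M : ℝ) :
    ∃ ρ ∈ Ioo (0 : ℝ) 1, (1 - ρ) * M ≤ ρ - κ := by
  have hnear : ∀ᶠ ρ in 𝓝[<] (1 : ℝ), (1 - ρ) * M < ρ - κ :=
    (ContinuousAt.eventually_lt (by fun_prop) (by fun_prop) (by simpa)).filter_mono
      nhdsWithin_le_nhds
  have hIoo : ∀ᶠ ρ in 𝓝[<] (1 : ℝ), ρ ∈ Ioo (0 : ℝ) 1 := Ioo_mem_nhdsLT zero_lt_one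
  obtain ⟨ρ, hρ, hκρ⟩ := (hIoo.and hnear).exists
  exact ⟨ρ, hρ, hκρ.le⟩

theorem le_sqrt_mul_sqrt_pow_mul_of_sq_le {x y K ρ : ℝ} {n : ℕ} (hy : 0 ≤ y) (hρ : 0 ≤ ρ)
    (h : x ^ 2 ≤ K * ρ ^ n * y ^ 2) : x ≤ √K * √ρ ^ n * y :=
  calc
    x ≤ √(K * (√ρ ^ n * y) ^ 2) := Real.le_sqrt_of_sq_le <| by
      rwa [mul_pow, pow_right_comm, Real.sq_sqrt hρ, ← mul_assoc]
    _ = √K * √ρ ^ n * y := by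
      rw [Real.sqrt_mul' _ (sq_nonneg _), Real.sqrt_sq (by positivity), mul_assoc]

/-- Abstract linear convergence: estimator reduction together with general
quasi-orthogonality imply linear convergence `a_{ℓ+n} ≤ C_lin qⁿ a_ℓ`. -/
theorem linear_convergence_of_reduction_and_quasiorthogonality
    (a b : ℕ → ℝ) (ha : ∀ ℓ, 0 ≤ a ℓ) (hb : ∀ ℓ, 0 ≤ b ℓ)
    (κ C₁ C₂ : ℝ) (hκ0 : 0 ≤ κ) (hκ1 : κ < 1) (hC₁ : 0 ≤ C₁) (hC₂ : 0 ≤ C₂)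
    (hred : ∀ ℓ, (a (ℓ + 1)) ^ 2 ≤ κ * (a ℓ) ^ 2 + C₁ * (b ℓ) ^ 2)
    (hbsum : Summable (fun j : ℕ => (b j) ^ 2))
    (hquasi : ∀ ℓ, ∑' j : ℕ, (b (ℓ + j)) ^ 2 ≤ C₂ * (a ℓ) ^ 2) :
    ∃ Clin q : ℝ, 1 ≤ Clin ∧ 0 < q ∧ q < 1 ∧
      ∀ ℓ n : ℕ, a (ℓ + n) ≤ Clin * q ^ n * a ℓ := by
  obtain ⟨ρ, ⟨hρ₀, hρ₁⟩, hκρ⟩ := exists_mem_Ioo_one_sub_mul_le_sub hκ1 (C₁ * C₂)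
  have hK : 1 ≤ 1 + C₁ * C₂ := le_add_of_nonneg_right (mul_nonneg hC₁ hC₂)
  have hsq (ℓ n : ℕ) : a (ℓ + n) ^ 2 ≤ (1 + C₁ * C₂) * ρ ^ n * a ℓ ^ 2 :=
    le_mul_pow_mul_of_reduction_of_quasiorthogonality (α := fun k ↦ a k ^ 2)
      (β := fun k ↦ b k ^ 2) hC₁ hρ₀.le hρ₁.le hκρ (fun _ ↦ sq_nonneg _) (fun _ ↦ sq_nonneg _)
      hbsum hred hquasi ℓ n
  exact ⟨√(1 + C₁ * C₂), √ρ, Real.one_le_sqrt.2 hK, Real.sqrt_pos.2 hρ₀,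
    (Real.sqrt_lt' one_pos).2 (by rwa [one_pow]),
    fun ℓ n ↦ le_sqrt_mul_sqrt_pow_mul_of_sq_le (ha ℓ) hρ₀.le (hsq ℓ n)⟩
end
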